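/- Suppose a group G acts on a ring A from the right so that for each g ∈ G the map a ↦ a^g is a ring automorphism. Let m, n ≥ 0 with m + n ≥ 1, and let a, b ∈ A satisfy D^m a = 0 and D^n b = 0. Then D^{m+n-1}(ab) = 0. Equivalently, if a ∈ P_{m-1}(G,A) and b ∈ P_{n-1}(G,A) then ab ∈ P_{m+n-2}(G,A); in particular, the set P(G,A) = ∪_{k≥0} P_k(G,A) of all polynomial-like elements in A is a subring of A. -/

import Mathlib

/-- The iterated difference operator `D^n` associated with a right `G`-action
`act : A → G → A` on (the additive group of) a ring `A`. -/
def iterD {A G : Type*} [Ring A] [Group G] (act : A → G → A) :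
    (n : ℕ) → A → (Fin n → G) → A
  | 0, a, _ => a
  | n + 1, a, g =>
      act (iterD act n a (fun i => g i.castSucc)) (g (Fin.last n))
        - iterD act n a (fun i => g i.castSucc)

/-- Recursive form of `D^n a = 0`. -/
def ZeroD {A G : Type*} [Ring A] [Group G] (act : A → G → A) : ℕ → A → Prop
  | 0, a => a = 0
  | n + 1, a => ∀ g : G, ZeroD act n (act a g - a)

theorem iterD_shift {A G : Type*} [Ring A] [Group G] (act : A → G → A) (n : ℕ) :
    ∀ (a : A) (g : Fin (n + 1) → G),
      iterD act (n + 1) a g = iterD act n (act a (g 0) - a) (fun i => g i.succ) := by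
  induction n with
  | zero => intro a g; rfl
  | succ n ih =>
    intro a g
    rw [iterD, ih]
    rfl

theorem zeroD_iff {A G : Type*} [Ring A] [Group G] (act : A → G → A) (n : ℕ) :
    ∀ a : A, (∀ g : Fin n → G, iterD act n a g = 0) ↔ ZeroD act n a := by
  induction n with
  | zero =>
    intro a
    exact ⟨fun h => h Fin.elim0, fun h _ => h⟩
  | succ n ih =>
    intro a
    constructor
    · intro h g
      rw [← ih]
      intro f
      have := h (Fin.cons g f)
      rw [iterD_shift] at this
      simpa using this
    · intro h g
      rw [iterD_shift]
      exact (ih _).2 (h (g 0)) _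

section
variable {A G : Type*} [Ring A] [Group G] {act : A → G → A}

theorem act_zero_of (hadd : ∀ (a b : A) (g : G), act (a + b) g = act a g + act b g)
    (g : G) : act 0 g = 0 := by
  have := hadd 0 0 g
  simpa using this

theorem act_neg_of (hadd : ∀ (a b : A) (g : G), act (a + b) g = act a g + act b g)
    (a : A) (g : G) : act (-a) g = - act a g := by
  have := hadd (-a) a g
  rw [neg_add_cancel, act_zero_of hadd] at this
  exact eq_neg_of_add_eq_zero_left this.symm

theorem zeroD_zero (hadd : ∀ (a b : A) (g : G), act (a + b) g = act a g + act b g)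
    (n : ℕ) : ZeroD act n 0 := by
  induction n with
  | zero => rfl
  | succ n ih => intro g; rw [act_zero_of hadd, sub_zero]; exact ih

theorem zeroD_add (hadd : ∀ (a b : A) (g : G), act (a + b) g = act a g + act b g)
    (n : ℕ) : ∀ a b : A, ZeroD act n a → ZeroD act n b → ZeroD act n (a + b) := by
  induction n with
  | zero => intro a b ha hb; simp only [ZeroD] at *; simp [ha, hb]
  | succ n ih =>
    intro a b ha hb g
    rw [hadd, add_sub_add_comm]
    exact ih _ _ (ha g) (hb g)

theorem zeroD_neg (hadd : ∀ (a b : A) (g : G), act (a + b) g = act a g + act b g)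
    (n : ℕ) : ∀ a : A, ZeroD act n a → ZeroD act n (-a) := by
  induction n with
  | zero => intro a ha; simp only [ZeroD] at *; simp [ha]
  | succ n ih =>
    intro a ha g
    have h := ih _ (ha g)
    rw [act_neg_of hadd]
    convert h using 1
    abel

theorem zeroD_act (hadd : ∀ (a b : A) (g : G), act (a + b) g = act a g + act b g)
    (hcomp : ∀ (a : A) (g h : G), act (act a g) h = act a (g * h))
    (n : ℕ) (a : A) (h : G) (ha : ZeroD act n a) : ZeroD act n (act a h) := by
  cases n with
  | zero => simp only [ZeroD] at *; rw [ha, act_zero_of hadd]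
  | succ n =>
    intro g
    have := zeroD_add hadd n _ _ (ha (h * g)) (zeroD_neg hadd n _ (ha h))
    rw [hcomp]
    convert this using 1
    abel

theorem zeroD_succ (hadd : ∀ (a b : A) (g : G), act (a + b) g = act a g + act b g)
    (n : ℕ) : ∀ a : A, ZeroD act n a → ZeroD act (n + 1) a := by
  induction n with
  | zero =>
    intro a ha g
    simp only [ZeroD] at *
    rw [ha, act_zero_of hadd, sub_zero]
  | succ n ih => intro a ha g; exact ih _ (ha g)

theorem zeroD_mono (hadd : ∀ (a b : A) (g : G), act (a + b) g = act a g + act b g)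
    {m n : ℕ} (hmn : m ≤ n) (a : A) (ha : ZeroD act m a) : ZeroD act n a := by
  induction hmn with
  | refl => exact ha
  | step _ ih => exact zeroD_succ hadd _ _ ih

theorem zeroD_mul (hadd : ∀ (a b : A) (g : G), act (a + b) g = act a g + act b g)
    (hmul : ∀ (a b : A) (g : G), act (a * b) g = act a g * act b g)
    (hcomp : ∀ (a : A) (g h : G), act (act a g) h = act a (g * h)) (m : ℕ) :
    ∀ (n : ℕ) (a b : A), ZeroD act m a → ZeroD act n b → ZeroD act (m + n - 1) (a * b) := by
  induction m with
  | zero =>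
    intro n a b ha _
    have ha' : a = 0 := ha
    rw [ha', zero_mul]
    exact zeroD_zero hadd _
  | succ m ihm =>
    intro n
    induction n with
    | zero =>
      intro a b _ hb
      have hb' : b = 0 := hb
      rw [hb', mul_zero]
      exact zeroD_zero hadd _
    | succ n ihn =>
      intro a b ha hb
      have e : m + 1 + (n + 1) - 1 = (m + n) + 1 := by omega
      rw [e]
      intro g
      have h1 := ihm (n + 1) _ _ (ha g) (zeroD_act hadd hcomp _ _ g hb)
      have h2 := ihn _ _ ha (hb g)
      have e1 : m + (n + 1) - 1 = m + n := by omega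
      have e2 : m + 1 + n - 1 = m + n := by omega
      rw [e1] at h1
      rw [e2] at h2
      have h := zeroD_add hadd _ _ _ h1 h2
      rw [hmul]
      convert h using 1
      rw [sub_mul, mul_sub]
      abel

end

/-- Suppose a group `G` acts on a ring `A` from the right by
ring automorphisms.  If `m + n ≥ 1`, `D^m a = 0` and `D^n b = 0`, then
`D^{m+n-1}(ab) = 0`.  Equivalently, `a ∈ P_{m-1}` and `b ∈ P_{n-1}` imply
`ab ∈ P_{m+n-2}` (stated below as: `a ∈ P_p`, `b ∈ P_q` imply `ab ∈ P_{p+q}`);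
in particular the set `P(G,A) = ∪ₖ P_k(G,A)` of all polynomial-like elements
of `A` is a subring of `A`. -/
theorem stmt_16 {A G : Type*} [Ring A] [Group G] (act : A → G → A)
    (hadd : ∀ (a b : A) (g : G), act (a + b) g = act a g + act b g)
    (hmul : ∀ (a b : A) (g : G), act (a * b) g = act a g * act b g)
    (hone' : ∀ g : G, act 1 g = 1)
    (hone : ∀ a : A, act a 1 = a)
    (hcomp : ∀ (a : A) (g h : G), act (act a g) h = act a (g * h)) :
    (∀ (m n : ℕ), 1 ≤ m + n → ∀ a b : A,
        (∀ g : Fin m → G, iterD act m a g = 0) →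
        (∀ g : Fin n → G, iterD act n b g = 0) →
        ∀ g : Fin (m + n - 1) → G, iterD act (m + n - 1) (a * b) g = 0) ∧
      (∀ (p q : ℕ) (a b : A),
        (∀ g : Fin (p + 1) → G, iterD act (p + 1) a g = 0) →
        (∀ g : Fin (q + 1) → G, iterD act (q + 1) b g = 0) →
        ∀ g : Fin (p + q + 1) → G, iterD act (p + q + 1) (a * b) g = 0) ∧
      (∃ S : Subring A, ∀ x : A,
        x ∈ S ↔ ∃ k : ℕ, ∀ g : Fin (k + 1) → G, iterD act (k + 1) x g = 0) := by
  simp only [zeroD_iff]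
  have hM := zeroD_mul hadd hmul hcomp
  have hM' : ∀ (p q : ℕ) (a b : A), ZeroD act (p + 1) a → ZeroD act (q + 1) b →
      ZeroD act (p + q + 1) (a * b) := by
    intro p q a b ha hb
    have h := hM _ _ _ _ ha hb
    have e : p + 1 + (q + 1) - 1 = p + q + 1 := by omega
    rwa [e] at h
  refine ⟨fun m n _ a b ha hb => hM m n a b ha hb, hM', ?_⟩
  refine ⟨{ carrier := {x | ∃ k : ℕ, ZeroD act (k + 1) x}
            mul_mem' := ?_, one_mem' := ?_, add_mem' := ?_, zero_mem' := ?_,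
            neg_mem' := ?_ }, fun x => Iff.rfl⟩
  · rintro a b ⟨p, ha⟩ ⟨q, hb⟩
    exact ⟨p + q, hM' p q a b ha hb⟩
  · refine ⟨0, fun g => ?_⟩
    rw [hone', sub_self]
    rfl
  · rintro a b ⟨p, ha⟩ ⟨q, hb⟩
    exact ⟨p + q, zeroD_add hadd _ _ _ (zeroD_mono hadd (by omega) _ ha)
      (zeroD_mono hadd (by omega) _ hb)⟩
  · exact ⟨0, zeroD_zero hadd _⟩
  · rintro a ⟨p, ha⟩
    exact ⟨p, zeroD_neg hadd _ _ ha⟩
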